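/- arXiv:2212.01115 — 5 statements merged into one kernel-verified Lean document; each statement's English description precedes it below -/
import Mathlib

section
/- Let m ≥ 2 be an odd number and n ≥ 1. Then no pair Ã = {A1, A2} of m-order n-dimensional real tensors is of type strong VP; that is, for any such A1, A2 there exist x ≠ y in ℝⁿ such that (A1 x^{m-1} − A1 y^{m-1})_i (A2 x^{m-1} − A2 y^{m-1})_i ≤ 0 for every i ∈ {1,…,n}. -/
open Finset

/-- For an `m`-order `n`-dimensional real tensor `A` (the first index separated, the
remaining `m-1` indices given as a function `Fin (m-1) → Fin n`),
`tProd A x i = (A x^{m-1})_i = ∑_{i2,…,im} a_{i i2 ⋯ im} x_{i2} ⋯ x_{im}`. -/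
noncomputable def tProd {n k : ℕ} (A : Fin n → (Fin k → Fin n) → ℝ)
    (x : Fin n → ℝ) : Fin n → ℝ :=
  fun i => ∑ f : Fin k → Fin n, A i f * ∏ j, x (f j)

section Homogeneity

variable {n k : ℕ} (A : Fin n → (Fin k → Fin n) → ℝ) (x : Fin n → ℝ)

theorem tProd_smul (c : ℝ) : tProd A (c • x) = c ^ k • tProd A x := by
  ext i
  calc tProd A (c • x) i
      = ∑ f : Fin k → Fin n, A i f * (c ^ k * ∏ j, x (f j)) := by
        simp only [tProd, Pi.smul_apply, smul_eq_mul, prod_mul_distrib, prod_const, card_univ,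
          Fintype.card_fin]
    _ = (c ^ k • tProd A x) i := by
        simp only [tProd, Pi.smul_apply, smul_eq_mul, mul_sum, mul_left_comm]

theorem tProd_neg_of_even (hk : Even k) : tProd A (-x) = tProd A x := by
  rw [← neg_one_smul ℝ x, tProd_smul, hk.neg_one_pow, one_smul]

end Homogeneity

/-- There is no pair of odd-order tensors of type strong VP: for any `A1, A2` of odd
order `m ≥ 2` there exist `x ≠ y` with
`(A1 x^{m-1} − A1 y^{m-1})_i (A2 x^{m-1} − A2 y^{m-1})_i ≤ 0` for all `i`. -/
theorem stmt_4 {m n : ℕ} (hm : 2 ≤ m) (hodd : Odd m) (hn : 1 ≤ n)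
    (A1 A2 : Fin n → (Fin (m - 1) → Fin n) → ℝ) :
    ∃ x y : Fin n → ℝ, x ≠ y ∧ ∀ i,
      (tProd A1 x i - tProd A1 y i) * (tProd A2 x i - tProd A2 y i) ≤ 0 := by
  have : NeZero n := ⟨Nat.one_le_iff_ne_zero.mp hn⟩
  have one_ne_neg_one : (1 : Fin n → ℝ) ≠ -1 := self_ne_neg.mpr one_ne_zero
  have even_degree : Even (m - 1) := Nat.Odd.sub_odd hodd odd_one
  refine ⟨1, -1, one_ne_neg_one, fun i ↦ ?_⟩
  rw [tProd_neg_of_even A1 1 even_degree, sub_self, zero_mul]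
end

section
/- Let m ≥ 2 be an even number and n ≥ 1, and let A1, A2 be m-order n-dimensional real tensors. If the pair Ã = {A1, A2} is of type VP-II, then Ã is of type strong VP. -/
open Finset

/-- The product `A Z` of an `m`-order tensor `A` with an `(m-1)`-order tensor `Z`:
`(A Z)_i = ∑_{i2,…,im} a_{i i2 ⋯ im} z_{i2 ⋯ im}`. -/
noncomputable def tApplyZ {n k : ℕ} (A : Fin n → (Fin k → Fin n) → ℝ)
    (Z : (Fin k → Fin n) → ℝ) : Fin n → ℝ :=
  fun i => ∑ f : Fin k → Fin n, A i f * Z f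

/-- A `k`-order tensor is symmetric if its entries are invariant under all
permutations of its indices. -/
def SymTensor {n k : ℕ} (Z : (Fin k → Fin n) → ℝ) : Prop :=
  ∀ (σ : Equiv.Perm (Fin k)) (f : Fin k → Fin n), Z (f ∘ σ) = Z f

/-- The pair `{A1, A2}` is of type VP-II: there is no symmetric `(m-1)`-order tensor `Z`
whose diagonal entries are not all zero with `A1 Z ∧ A2 Z ≤ 0 ≤ A1 Z ∨ A2 Z`. -/
def VPII {n k : ℕ} (A1 A2 : Fin n → (Fin k → Fin n) → ℝ) : Prop :=
  ¬ ∃ Z : (Fin k → Fin n) → ℝ, SymTensor Z ∧ (∃ i : Fin n, Z (fun _ => i) ≠ 0) ∧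
    ∀ i, min (tApplyZ A1 Z i) (tApplyZ A2 Z i) ≤ 0 ∧
      0 ≤ max (tApplyZ A1 Z i) (tApplyZ A2 Z i)

/-- The pair `{A1, A2}` is of type strong VP: for all `x ≠ y`,
`max_i (A1 x^{m-1} − A1 y^{m-1})_i (A2 x^{m-1} − A2 y^{m-1})_i > 0`. -/
def StrongVP {n k : ℕ} (A1 A2 : Fin n → (Fin k → Fin n) → ℝ) : Prop :=
  ∀ x y : Fin n → ℝ, x ≠ y → ∃ i,
    0 < (tProd A1 x i - tProd A1 y i) * (tProd A2 x i - tProd A2 y i)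

/-!
The difference `Z = x^{⊗(m-1)} - y^{⊗(m-1)}` is a symmetric tensor with
`Aₗ Z = Aₗ x^{m-1} - Aₗ y^{m-1}`, and since `m - 1` is odd its diagonal `x i ^ (m-1) - y i ^ (m-1)`
vanishes identically only if `x = y`. The sign condition defining type VP-II says exactly that
`(A1 Z)_i (A2 Z)_i ≤ 0` for every `i`, so it must fail for this `Z`.
-/

theorem min_nonpos_and_max_nonneg_iff_mul_nonpos {R : Type*} [CommRing R] [LinearOrder R]
    [IsStrictOrderedRing R] {a b : R} : min a b ≤ 0 ∧ 0 ≤ max a b ↔ a * b ≤ 0 := by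
  rw [← min_mul_max a b]
  refine ⟨fun h => mul_nonpos_of_nonpos_of_nonneg h.1 h.2, fun h => ⟨?_, ?_⟩⟩
  · by_contra! hmin
    exact h.not_gt (mul_pos hmin (hmin.trans_le min_le_max))
  · by_contra! hmax
    exact h.not_gt (mul_pos_of_neg_of_neg (min_le_max.trans_lt hmax) hmax)

/-- The `k`-th tensor power `x^{⊗k}` of a vector `x`, as an array: the rank-one tensor with
entries `x_{i1} ⋯ x_{ik}`, the multi-index being a function on `Fin k`. -/
def tensorPow {ι M : Type*} [CommMonoid M] (k : ℕ) (x : ι → M) : (Fin k → ι) → M :=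
  fun f => ∏ j, x (f j)

theorem tensorPow_const {ι M : Type*} [CommMonoid M] (k : ℕ) (x : ι → M) (i : ι) :
    tensorPow k x (fun _ => i) = x i ^ k :=
  Fin.prod_const k (x i)

theorem exists_tensorPow_const_ne_of_odd {ι R : Type*} [CommRing R] [LinearOrder R]
    [IsStrictOrderedRing R] {k : ℕ} (hk : Odd k) {x y : ι → R} (hxy : x ≠ y) :
    ∃ i, tensorPow k x (fun _ => i) ≠ tensorPow k y (fun _ => i) := by
  obtain ⟨i, hi⟩ := Function.ne_iff.mp hxy
  refine ⟨i, ?_⟩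
  rw [tensorPow_const, tensorPow_const]
  exact hk.pow_injective.ne hi

section Tensors

variable {n k : ℕ}

theorem symTensor_tensorPow (x : Fin n → ℝ) : SymTensor (tensorPow k x) :=
  fun σ f => Equiv.prod_comp σ fun j => x (f j)

theorem SymTensor.sub {Z W : (Fin k → Fin n) → ℝ} (hZ : SymTensor Z) (hW : SymTensor W) :
    SymTensor (Z - W) :=
  fun σ f => congrArg₂ (· - ·) (hZ σ f) (hW σ f)

theorem tApplyZ_tensorPow (A : Fin n → (Fin k → Fin n) → ℝ) (x : Fin n → ℝ) :
    tApplyZ A (tensorPow k x) = tProd A x :=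
  rfl

theorem tApplyZ_sub (A : Fin n → (Fin k → Fin n) → ℝ) (Z W : (Fin k → Fin n) → ℝ) :
    tApplyZ A (Z - W) = tApplyZ A Z - tApplyZ A W := by
  ext i
  simp only [tApplyZ, Pi.sub_apply, mul_sub, sum_sub_distrib]

theorem tApplyZ_tensorPow_sub (A : Fin n → (Fin k → Fin n) → ℝ) (x y : Fin n → ℝ) :
    tApplyZ A (tensorPow k x - tensorPow k y) = tProd A x - tProd A y := by
  rw [tApplyZ_sub, tApplyZ_tensorPow, tApplyZ_tensorPow]

theorem VPII.exists_mul_pos {A1 A2 : Fin n → (Fin k → Fin n) → ℝ} (h : VPII A1 A2)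
    {Z : (Fin k → Fin n) → ℝ} (hZ : SymTensor Z) (hdiag : ∃ i : Fin n, Z (fun _ => i) ≠ 0) :
    ∃ i, 0 < tApplyZ A1 Z i * tApplyZ A2 Z i := by
  by_contra! hle
  exact h ⟨Z, hZ, hdiag, fun i => min_nonpos_and_max_nonneg_iff_mul_nonpos.mpr (hle i)⟩

end Tensors

/-- For even order, type VP-II implies type strong VP. -/
theorem stmt_5 {m n : ℕ} (hm : 2 ≤ m) (heven : Even m) (hn : 1 ≤ n)
    (A1 A2 : Fin n → (Fin (m - 1) → Fin n) → ℝ)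
    (hVPII : VPII A1 A2) : StrongVP A1 A2 := by
  intro x y hxy
  have hodd : Odd (m - 1) := Nat.Even.sub_odd (by lia) heven odd_one
  have hsym : SymTensor (tensorPow (m - 1) x - tensorPow (m - 1) y) :=
    (symTensor_tensorPow x).sub (symTensor_tensorPow y)
  have hdiag : ∃ i, (tensorPow (m - 1) x - tensorPow (m - 1) y) (fun _ => i) ≠ 0 :=
    (exists_tensorPow_const_ne_of_odd hodd hxy).imp fun _ => sub_ne_zero.mpr
  obtain ⟨i, hi⟩ := hVPII.exists_mul_pos hsym hdiag
  rw [tApplyZ_tensorPow_sub, tApplyZ_tensorPow_sub] at hi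
  exact ⟨i, hi⟩
end

section
/- Let m ≥ 2 and n ≥ 1, and let A1, A2 be m-order n-dimensional real tensors. The pair Ã = {A1, A2} is of type VE if and only if for all q1 ≥ 0 and q2 ≥ 0 in ℝⁿ, every solution x of the vertical tensor complementarity problem VTCP(Ã, q̃) satisfies x = 0 (that is, the VTCP has at most the zero solution). -/
open Finset

/-- `x` solves the vertical tensor complementarity problem VTCP({A1,A2},{q1,q2}):
`q1 + A1 x^{m-1} ≥ 0`, `q2 + A2 x^{m-1} ≥ 0`, and
`(q1 + A1 x^{m-1})ᵀ (q2 + A2 x^{m-1}) = 0`. -/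
def VTCPSol {n k : ℕ} (A1 A2 : Fin n → (Fin k → Fin n) → ℝ)
    (q1 q2 x : Fin n → ℝ) : Prop :=
  (∀ i, 0 ≤ q1 i + tProd A1 x i) ∧ (∀ i, 0 ≤ q2 i + tProd A2 x i) ∧
    ∑ i, (q1 i + tProd A1 x i) * (q2 i + tProd A2 x i) = 0

/-!
Two vectors `u, v` are complementary exactly when `u ⊓ v = 0`. Raising `a` and `b` by nonnegative
shifts only increases `a ⊓ b`, so if the shifted vectors are complementary then `a ⊓ b ≤ 0`.
Conversely, the negative parts are shifts turning `a` and `b` into `a⁺` and `b⁺`, and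
`a⁺ ⊓ b⁺ = (a ⊓ b)⁺` vanishes as soon as `a ⊓ b ≤ 0`.
-/

theorem exists_nonneg_add_inf_eq_zero_iff {G : Type*} [Lattice G] [AddCommGroup G]
    [IsOrderedAddMonoid G] {a b : G} :
    (∃ p q : G, 0 ≤ p ∧ 0 ≤ q ∧ (p + a) ⊓ (q + b) = 0) ↔ a ⊓ b ≤ 0 := by
  constructor
  · rintro ⟨p, q, hp, hq, hpq⟩
    calc a ⊓ b ≤ (p + a) ⊓ (q + b) :=
          inf_le_inf (le_add_of_nonneg_left hp) (le_add_of_nonneg_left hq)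
      _ = 0 := hpq
  · intro hab
    let : DistribLattice G := AddCommGroup.toDistribLattice G
    have negPart_add_self (c : G) : c⁻ + c = c⁺ :=
      (sub_eq_iff_eq_add'.mp (posPart_sub_negPart c)).symm
    refine ⟨a⁻, b⁻, negPart_nonneg a, negPart_nonneg b, ?_⟩
    calc (a⁻ + a) ⊓ (b⁻ + b) = (a ⊓ b)⁺ := by
          rw [negPart_add_self, negPart_add_self, posPart_min]
      _ = 0 := posPart_eq_zero.mpr hab

/-- Complementarity of two vectors, the relation imposed on the two sides of a vertical
complementarity problem: both are nonnegative and their dot product vanishes. -/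
def IsComplementary {ι R : Type*} [Fintype ι] [Semiring R] [LE R] (u v : ι → R) : Prop :=
  0 ≤ u ∧ 0 ≤ v ∧ u ⬝ᵥ v = 0

section Complementarity

variable {ι R : Type*} [Fintype ι] [Semiring R] [LinearOrder R] [IsOrderedRing R]
  [NoZeroDivisors R] {u v : ι → R}

theorem dotProduct_eq_zero_iff_inf_eq_zero (hu : 0 ≤ u) (hv : 0 ≤ v) :
    u ⬝ᵥ v = 0 ↔ u ⊓ v = 0 := by
  have mul_eq_zero_iff_inf (i : ι) : u i * v i = 0 ↔ u i ⊓ v i = 0 := by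
    rw [mul_eq_zero, min_eq_iff]
    exact or_congr (iff_self_and.mpr fun h => h.trans_le (hv i))
      (iff_self_and.mpr fun h => h.trans_le (hu i))
  calc u ⬝ᵥ v = 0 ↔ ∀ i, u i * v i = 0 := by
        simp only [dotProduct, mem_univ, true_imp_iff,
          sum_eq_zero_iff_of_nonneg fun i _ => mul_nonneg (hu i) (hv i)]
    _ ↔ ∀ i, u i ⊓ v i = 0 := forall_congr' mul_eq_zero_iff_inf
    _ ↔ u ⊓ v = 0 := funext_iff.symm

theorem isComplementary_iff_inf_eq_zero : IsComplementary u v ↔ u ⊓ v = 0 := by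
  constructor
  · rintro ⟨hu, hv, huv⟩
    exact (dotProduct_eq_zero_iff_inf_eq_zero hu hv).mp huv
  · intro h
    obtain ⟨hu, hv⟩ : 0 ≤ u ∧ 0 ≤ v := le_inf_iff.mp h.ge
    exact ⟨hu, hv, (dotProduct_eq_zero_iff_inf_eq_zero hu hv).mpr h⟩

end Complementarity

theorem stmt_9_general {E ι R : Type*} [Zero E] [Fintype ι] [Ring R] [LinearOrder R]
    [IsOrderedRing R] [NoZeroDivisors R] (F G : E → ι → R) :
    (∀ x, F x ⊓ G x ≤ 0 → x = 0) ↔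
      ∀ p q : ι → R, 0 ≤ p → 0 ≤ q → ∀ x, IsComplementary (p + F x) (q + G x) → x = 0 := by
  simp only [isComplementary_iff_inf_eq_zero, ← exists_nonneg_add_inf_eq_zero_iff]
  exact ⟨fun h p q hp hq x hx => h x ⟨p, q, hp, hq, hx⟩,
    fun h x ⟨p, q, hp, hq, hx⟩ => h p q hp hq x hx⟩

/-- `{A1, A2}` is of type VE iff for all `q1 ≥ 0`, `q2 ≥ 0` the VTCP has at most the
zero solution. -/
theorem stmt_9 {m n : ℕ} (hm : 2 ≤ m) (hn : 1 ≤ n)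
    (A1 A2 : Fin n → (Fin (m - 1) → Fin n) → ℝ) :
    (∀ x : Fin n → ℝ, (∀ i, min (tProd A1 x i) (tProd A2 x i) ≤ 0) → x = 0) ↔
      ∀ q1 q2 : Fin n → ℝ, (∀ i, 0 ≤ q1 i) → (∀ i, 0 ≤ q2 i) →
        ∀ x : Fin n → ℝ, VTCPSol A1 A2 q1 q2 x → x = 0 :=
  stmt_9_general (tProd A1) (tProd A2)
end

section
/- Let m ≥ 2 be an even number and n ≥ 1, and let A1, A2 be m-order n-dimensional real tensors. If for all q1, q2 ∈ ℝⁿ the vertical tensor complementarity problem VTCP(Ã, q̃) has at most one solution, then the pair Ã = {A1, A2} is of type VP-I. -/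
open Finset

/-!
Take `q1` and `q2` to be the negative parts of `A1 x^{m-1}` and `A2 x^{m-1}`. The residuals of the
VTCP are then the positive parts of these vectors at `x` and their negative parts at `0`.
Complementarity says that the minimum of the two residuals vanishes. Since
`min a⁺ b⁺ = (min a b)⁺` and `min a⁻ b⁻ = (max a b)⁻`, the two inequalities of the VP-I system say
exactly that `x` and `0`, respectively, are solutions.
-/

lemma min_eq_zero_iff_nonneg_and_mul_eq_zero {R : Type*} [MulZeroClass R] [NoZeroDivisors R]
    [LinearOrder R] {a b : R} : min a b = 0 ↔ 0 ≤ a ∧ 0 ≤ b ∧ a * b = 0 := by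
  rw [min_eq_iff, mul_eq_zero]
  grind

lemma negPart_add_self {α : Type*} [Lattice α] [AddCommGroup α] [AddLeftMono α] (a : α) :
    a⁻ + a = a⁺ :=
  (sub_eq_iff_eq_add'.1 (posPart_sub_negPart a)).symm

section VTCP

variable {n k : ℕ}

lemma tProd_zero (hk : k ≠ 0) (A : Fin n → (Fin k → Fin n) → ℝ) : tProd A 0 = 0 := by
  ext i
  simp [tProd, hk]

lemma vtcpSol_iff_min_eq_zero {A1 A2 : Fin n → (Fin k → Fin n) → ℝ} {q1 q2 x : Fin n → ℝ} :
    VTCPSol A1 A2 q1 q2 x ↔ ∀ i, min (q1 i + tProd A1 x i) (q2 i + tProd A2 x i) = 0 := by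
  simp only [VTCPSol, min_eq_zero_iff_nonneg_and_mul_eq_zero, forall_and]
  refine and_congr_right fun h1 => and_congr_right fun h2 => ?_
  simp [sum_eq_zero_iff_of_nonneg fun i _ => mul_nonneg (h1 i) (h2 i)]

lemma vtcpSol_negPart_self_iff {A1 A2 : Fin n → (Fin k → Fin n) → ℝ} {x : Fin n → ℝ} :
    VTCPSol A1 A2 (tProd A1 x)⁻ (tProd A2 x)⁻ x ↔
      ∀ i, min (tProd A1 x i) (tProd A2 x i) ≤ 0 := by
  simp only [vtcpSol_iff_min_eq_zero, Pi.negPart_apply, negPart_add_self, ← posPart_min,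
    posPart_eq_zero]

lemma vtcpSol_negPart_zero_iff (hk : k ≠ 0) {A1 A2 : Fin n → (Fin k → Fin n) → ℝ}
    {x : Fin n → ℝ} :
    VTCPSol A1 A2 (tProd A1 x)⁻ (tProd A2 x)⁻ 0 ↔
      ∀ i, 0 ≤ max (tProd A1 x i) (tProd A2 x i) := by
  simp only [vtcpSol_iff_min_eq_zero, tProd_zero hk, Pi.zero_apply, add_zero, Pi.negPart_apply,
    ← negPart_max, negPart_eq_zero]

theorem stmt_12_general (hk : k ≠ 0) (A1 A2 : Fin n → (Fin k → Fin n) → ℝ)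
    (huniq : ∀ q1 q2 x : Fin n → ℝ, VTCPSol A1 A2 q1 q2 x → VTCPSol A1 A2 q1 q2 0 → x = 0) :
    ¬ ∃ x : Fin n → ℝ, x ≠ 0 ∧
      ∀ i, min (tProd A1 x i) (tProd A2 x i) ≤ 0 ∧ 0 ≤ max (tProd A1 x i) (tProd A2 x i) := by
  rintro ⟨x, hx, hsystem⟩
  obtain ⟨hmin, hmax⟩ := forall_and.1 hsystem
  exact hx <| huniq _ _ x (vtcpSol_negPart_self_iff.2 hmin) ((vtcpSol_negPart_zero_iff hk).2 hmax)

end VTCP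

/-- For even order, if the VTCP has at most one solution for all `q1, q2`, then
`{A1, A2}` is of type VP-I. -/
theorem stmt_12 {m n : ℕ} (hm : 2 ≤ m) (heven : Even m) (hn : 1 ≤ n)
    (A1 A2 : Fin n → (Fin (m - 1) → Fin n) → ℝ)
    (huniq : ∀ q1 q2 x y : Fin n → ℝ,
      VTCPSol A1 A2 q1 q2 x → VTCPSol A1 A2 q1 q2 y → x = y) :
    ¬ ∃ x : Fin n → ℝ, x ≠ 0 ∧ ((∀ i, 0 ≤ x i) ∨ (∀ i, x i ≤ 0)) ∧
      (∀ i, min (tProd A1 x i) (tProd A2 x i) ≤ 0 ∧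
        0 ≤ max (tProd A1 x i) (tProd A2 x i)) := by
  rintro ⟨x, hx, -, hsystem⟩
  exact stmt_12_general (by omega) A1 A2 (huniq · · · 0) ⟨x, hx, hsystem⟩
end

section
/- Let m ≥ 2 and n ≥ 1, and let A1, A2 be m-order n-dimensional real tensors. If the pair Ã = {A1, A2} is of type strong VP, then for all q1, q2 ∈ ℝⁿ the vertical tensor complementarity problem VTCP(Ã, q̃) has at most one solution. -/
open Finset

/-! Two complementary pairs of nonnegative vectors `(u, v)` and `(u', v')` satisfy
`(uᵢ - u'ᵢ) (vᵢ - v'ᵢ) = -(uᵢ v'ᵢ + u'ᵢ vᵢ) ≤ 0` in every coordinate, because `uᵢ vᵢ = 0 = u'ᵢ v'ᵢ`.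
Two solutions yield two such pairs, and the shifts `q1`, `q2` cancel in the differences; distinct
solutions would therefore contradict the strict positivity required of some coordinate. -/

section Complementarity

variable {X ι R : Type*} [Fintype ι] [Ring R] [PartialOrder R] [IsOrderedRing R]

/-- The complementarity relation `0 ≤ u ⊥ v ≥ 0` between two vectors, with the orthogonality
expressed by the dot product. -/
structure IsComplementaryPair (u v : ι → R) : Prop where
  nonneg_left : 0 ≤ u
  nonneg_right : 0 ≤ v
  dotProduct_eq_zero : u ⬝ᵥ v = 0

theorem IsComplementaryPair.mul_eq_zero {u v : ι → R} (h : IsComplementaryPair u v) :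
    u * v = 0 :=
  (Fintype.sum_eq_zero_iff_of_nonneg (mul_nonneg h.nonneg_left h.nonneg_right)).1
    h.dotProduct_eq_zero

theorem IsComplementaryPair.sub_mul_sub_nonpos {u v u' v' : ι → R}
    (h : IsComplementaryPair u v) (h' : IsComplementaryPair u' v') :
    (u - u') * (v - v') ≤ 0 := by
  have cross_nonneg : 0 ≤ u * v' + u' * v :=
    add_nonneg (mul_nonneg h.nonneg_left h'.nonneg_right)
      (mul_nonneg h'.nonneg_left h.nonneg_right)
  calc (u - u') * (v - v') = u * v + u' * v' - (u * v' + u' * v) := by noncomm_ring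
    _ = -(u * v' + u' * v) := by rw [h.mul_eq_zero, h'.mul_eq_zero, add_zero, zero_sub]
    _ ≤ 0 := neg_nonpos.2 cross_nonneg

theorem stmt_13_general {F G : X → ι → R}
    (hFG : ∀ x y, x ≠ y → ∃ i, 0 < (F x i - F y i) * (G x i - G y i)) (q₁ q₂ : ι → R) :
    {x | IsComplementaryPair (q₁ + F x) (q₂ + G x)}.Subsingleton := by
  intro x hx y hy
  by_contra hne
  obtain ⟨i, hi⟩ := hFG x y hne
  have hle : (F x - F y) * (G x - G y) ≤ 0 := by
    simpa only [add_sub_add_left_eq_sub] using hx.sub_mul_sub_nonpos hy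
  exact (hle i).not_gt hi

end Complementarity

theorem VTCPSol.isComplementaryPair {n k : ℕ} {A1 A2 : Fin n → (Fin k → Fin n) → ℝ}
    {q1 q2 x : Fin n → ℝ} (h : VTCPSol A1 A2 q1 q2 x) :
    IsComplementaryPair (q1 + tProd A1 x) (q2 + tProd A2 x) :=
  ⟨h.1, h.2.1, h.2.2⟩

/-- If `{A1, A2}` is of type strong VP then the VTCP has at most one solution for all
`q1, q2`. -/
theorem stmt_13 {m n : ℕ} (hm : 2 ≤ m) (hn : 1 ≤ n)
    (A1 A2 : Fin n → (Fin (m - 1) → Fin n) → ℝ)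
    (hSVP : StrongVP A1 A2) :
    ∀ q1 q2 x y : Fin n → ℝ,
      VTCPSol A1 A2 q1 q2 x → VTCPSol A1 A2 q1 q2 y → x = y :=
  fun q1 q2 _ _ hx hy =>
    stmt_13_general hSVP q1 q2 hx.isComplementaryPair hy.isComplementaryPair
end
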